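/- arXiv:2501.18413 — 2 statements merged into one kernel-verified Lean document; each statement's English description precedes it below -/
import Mathlib

section
/- Let granular-balls be indexed by a nonempty finite set J with centers c_i : ι → ℝ, positive sizes w_i > 0, decision classes d_i in a finite nonempty set L with the assignment i ↦ d_i non-constant, and let C > 0. If B₁ ⊆ B₂ are finite attribute subsets of ι, then the weighted granular-ball fuzzy dependency is monotone: W∂^C_{B₁} ≤ W∂^C_{B₂}, where W∂^C_B = (∑_{j ∈ J} w_j · POS^C_B(j)) / (∑_{j ∈ J} w_j). (Property 3.) -/
open Finset

/-- Partial Euclidean distance over an attribute subset `B`. -/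
noncomputable def pdist {ι : Type*} (B : Finset ι) (x y : ι → ℝ) : ℝ :=
  Real.sqrt (∑ k ∈ B, (x k - y k) ^ 2)

/-- If the decision-class assignment is non-constant, then for every class `t`
the set of balls whose class differs from `t` is nonempty. -/
lemma filter_ne_nonempty {J L : Type*} [Fintype J] [DecidableEq L] (d : J → L)
    (hd : ∃ i₁ i₂, d i₁ ≠ d i₂) (t : L) :
    (Finset.univ.filter (fun i => d i ≠ t)).Nonempty := by
  obtain ⟨i₁, i₂, h⟩ := hd
  by_cases h1 : d i₁ = t
  · exact ⟨i₂, Finset.mem_filter.mpr ⟨Finset.mem_univ _, fun he => h (h1.trans he.symm)⟩⟩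
  · exact ⟨i₁, Finset.mem_filter.mpr ⟨Finset.mem_univ _, h1⟩⟩

/-- Granular-ball fuzzy positive-region membership of ball `j`:
`POS^C_B(j) = max_{t ∈ L} (1/√C) · min_{i : d i ≠ t} Δ_B(c i, c j)`. -/
noncomputable def pos {ι J L : Type*} [Fintype J] [Fintype L] [Nonempty L] [DecidableEq L]
    (c : J → ι → ℝ) (d : J → L) (hd : ∃ i₁ i₂, d i₁ ≠ d i₂)
    (C : ℝ) (B : Finset ι) (j : J) : ℝ :=
  Finset.univ.sup' Finset.univ_nonempty fun t : L =>
    (1 / Real.sqrt C) *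
      (Finset.univ.filter fun i => d i ≠ t).inf' (filter_ne_nonempty d hd t)
        (fun i => pdist B (c i) (c j))

/-- Weighted granular-ball fuzzy dependency
`W∂^C_B = (∑_j w_j · POS^C_B(j)) / (∑_j w_j)`. -/
noncomputable def wdep {ι J L : Type*} [Fintype J] [Fintype L] [Nonempty L] [DecidableEq L]
    (c : J → ι → ℝ) (d : J → L) (hd : ∃ i₁ i₂, d i₁ ≠ d i₂)
    (w : J → ℝ) (C : ℝ) (B : Finset ι) : ℝ :=
  (∑ j, w j * pos c d hd C B j) / (∑ j, w j)


/-- Property 3: if `B₁ ⊆ B₂` then the weighted granular-ball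
fuzzy dependency is monotone: `W∂^C_{B₁} ≤ W∂^C_{B₂}`. -/
theorem wdep_mono {ι J L : Type*} [Fintype ι] [Fintype J] [Nonempty J]
    [Fintype L] [Nonempty L] [DecidableEq L]
    (c : J → ι → ℝ) (w : J → ℝ) (hw : ∀ i, 0 < w i)
    (d : J → L) (hd : ∃ i₁ i₂, d i₁ ≠ d i₂)
    (C : ℝ) (hC : 0 < C) (B₁ B₂ : Finset ι) (hB : B₁ ⊆ B₂) :
    wdep c d hd w C B₁ ≤ wdep c d hd w C B₂ := by
  unfold wdep
  refine div_le_div_of_nonneg_right ?_ (Finset.sum_nonneg fun i _ => (hw i).le)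
  refine Finset.sum_le_sum fun j _ => mul_le_mul_of_nonneg_left ?_ (hw j).le
  unfold pos
  refine Finset.sup'_mono_fun fun t _ => ?_
  refine mul_le_mul_of_nonneg_left ?_ (by positivity)
  refine Finset.inf'_mono_fun fun i _ => ?_
  unfold pdist
  exact Real.sqrt_le_sqrt
    (Finset.sum_le_sum_of_subset_of_nonneg hB fun k _ _ => sq_nonneg _)
end

section
/- Let granular-balls be indexed by a nonempty finite set J with centers c_i : ι → ℝ, positive sizes w_i > 0, and decision classes d_i in a finite nonempty set L, with the assignment i ↦ d_i non-constant. Let B ⊆ ι be a finite attribute subset with |B| = i and let a ∈ ι with a ∉ B. Then the significance of a relative to B is nonnegative: SIG^i(a, B) = W∂^{i+1}_{B ∪ {a}} − W∂^{i+1}_B ≥ 0. -/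
open Finset

/-- Significance of attribute `a` relative to `B` (with `i = |B|`):
`SIG^i(a, B) = W∂^{i+1}_{B ∪ {a}} − W∂^{i+1}_B`, where the superscript `i+1`
denotes the distance parameter `C = i + 1`. -/
noncomputable def sig {ι J L : Type*} [DecidableEq ι] [Fintype J] [Fintype L]
    [Nonempty L] [DecidableEq L]
    (c : J → ι → ℝ) (d : J → L) (hd : ∃ i₁ i₂, d i₁ ≠ d i₂)
    (w : J → ℝ) (a : ι) (B : Finset ι) : ℝ :=
  wdep c d hd w ((B.card : ℝ) + 1) (insert a B) -
    wdep c d hd w ((B.card : ℝ) + 1) B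


/-- the significance of an attribute `a ∉ B` relative to `B` is
nonnegative: `SIG^i(a, B) = W∂^{i+1}_{B ∪ {a}} − W∂^{i+1}_B ≥ 0`. -/
theorem sig_nonneg {ι J L : Type*} [Fintype ι] [DecidableEq ι]
    [Fintype J] [Nonempty J] [Fintype L] [Nonempty L] [DecidableEq L]
    (c : J → ι → ℝ) (w : J → ℝ) (hw : ∀ i, 0 < w i)
    (d : J → L) (hd : ∃ i₁ i₂, d i₁ ≠ d i₂)
    (B : Finset ι) (a : ι) (ha : a ∉ B) :
    0 ≤ sig c d hd w a B := by
  unfold sig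
  rw [sub_nonneg]
  unfold wdep
  refine div_le_div_of_nonneg_right ?_ (Finset.sum_nonneg fun j _ => (hw j).le)
  refine Finset.sum_le_sum fun j _ => mul_le_mul_of_nonneg_left ?_ (hw j).le
  unfold pos
  refine Finset.sup'_mono_fun fun t _ => mul_le_mul_of_nonneg_left ?_ (by positivity)
  refine Finset.inf'_mono_fun fun i _ => ?_
  unfold pdist
  exact Real.sqrt_le_sqrt (Finset.sum_le_sum_of_subset_of_nonneg
    (Finset.subset_insert a B) fun k _ _ => sq_nonneg _)
end
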